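/- arXiv:2407.17428 — 11 statements merged into one kernel-verified Lean document; each statement's English description precedes it below -/
import Mathlib

section
/- Assume additionally θ_L > β_H·θ_H, and let I_L', I_H' > I_r1 be the actual performances delivered by the low- and high-type AIGC models. Then the high-contract utility is smaller than the low-contract utility, i.e. U_W(θ_H, I_H', p_H*) < U_W(θ_L, I_L', p_L*), if and only if η_2 < [ ( ((θ_H − β_H·θ_H)/(θ_L − β_H·θ_H)) · ((I_L' − I_r1)/(I_H' − I_r1)) )^{θ_H/(θ_H − θ_L)} · exp( η_3/(β_L·(η_1 − η_3)) − (η_3/(θ_H − θ_L))·(I_H' − I_L') ) ] / (I_L' − I_r1). -/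
open Real

noncomputable def UW (η2 η3 Ir1 Ir2 θ I p : ℝ) : ℝ :=
  θ * Real.log (η2 * (I - Ir1)) + η3 * (I - Ir2) - p

noncomputable def priceL (θL η2 η3 Ir1 Ir2 IL : ℝ) : ℝ :=
  θL * Real.log (η2 * (IL - Ir1)) + η3 * (IL - Ir2)

noncomputable def priceH (θL θH η2 η3 Ir1 Ir2 IL IH : ℝ) : ℝ :=
  priceL θL η2 η3 Ir1 Ir2 IL + θH * Real.log ((IH - Ir1) / (IL - Ir1)) + η3 * (IH - IL)

noncomputable def fobj (θL θH βL βH η1 η2 η3 Ir1 Ir2 ΔC IL IH : ℝ) : ℝ :=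
  βL * (priceL θL η2 η3 Ir1 Ir2 IL - η1 * IL)
    + βH * (priceH θL θH η2 η3 Ir1 Ir2 IL IH - η1 * IH) + ΔC

noncomputable def ILstar (θL θH βL βH η1 η3 Ir1 : ℝ) : ℝ :=
  Ir1 + (θL - βH * θH) / (βL * (η1 - η3))

noncomputable def IHstar (θH η1 η3 Ir1 : ℝ) : ℝ :=
  Ir1 + θH / (η1 - η3)

noncomputable def UE (βL βH η1 ΔC pLo IL pHi IH : ℝ) : ℝ :=
  βL * (pLo - η1 * IL) + βH * (pHi - η1 * IH) + ΔC

theorem stmt_0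
    (θL θH βL βH η1 η2 η3 Ir1 Ir2 ΔC : ℝ)
    (hθL : 0 < θL) (hθ : θL < θH)
    (hβL0 : 0 < βL) (hβL1 : βL < 1)
    (hβH0 : 0 < βH) (hβH1 : βH < 1)
    (hβ : βL + βH = 1)
    (hη3 : 0 < η3) (hη13 : η3 < η1) (hη2 : 0 < η2)
    (hIr : Ir1 < Ir2)
    (hmono : βH * θH < θL)
    (IL' IH' : ℝ) (hIL' : Ir1 < IL') (hIH' : Ir1 < IH') :
    UW η2 η3 Ir1 Ir2 θH (IH') (priceH θL θH η2 η3 Ir1 Ir2 (ILstar θL θH βL βH η1 η3 Ir1) (IHstar θH η1 η3 Ir1)) <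
      UW η2 η3 Ir1 Ir2 θL (IL') (priceL θL η2 η3 Ir1 Ir2 (ILstar θL θH βL βH η1 η3 Ir1)) ↔
    η2 < ((((θH - βH * θH) / (θL - βH * θH)) * ((IL' - Ir1) / (IH' - Ir1))) ^ (θH / (θH - θL)) * Real.exp (η3 / (βL * (η1 - η3)) - η3 / (θH - θL) * (IH' - IL'))) / (IL' - Ir1) := by
  have hD : 0 < θH - θL := by linarith
  have ha : 0 < IL' - Ir1 := by linarith
  have hb : 0 < IH' - Ir1 := by linarith
  have hE : 0 < η1 - η3 := by linarith
  have hN : 0 < θL - βH * θH := by linarith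
  have hM : 0 < θH - βH * θH := by linarith
  have hbl : βL = 1 - βH := by linarith
  have hR : (IHstar θH η1 η3 Ir1 - Ir1) / (ILstar θL θH βL βH η1 η3 Ir1 - Ir1)
      = (θH - βH * θH) / (θL - βH * θH) := by
    unfold IHstar ILstar
    rw [add_sub_cancel_left, add_sub_cancel_left]
    have h1 : θH - βH * θH = βL * θH := by rw [hbl]; ring
    rw [h1]
    field_simp
  have hI : IHstar θH η1 η3 Ir1 - ILstar θL θH βL βH η1 η3 Ir1
      = (θH - θL) / (βL * (η1 - η3)) := by
    unfold IHstar ILstar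
    rw [add_sub_add_left_eq_sub]
    field_simp
    rw [hbl]; ring
  have hRp : 0 < (θH - βH * θH) / (θL - βH * θH) := div_pos hM hN
  have hq : 0 < (IL' - Ir1) / (IH' - Ir1) := div_pos ha hb
  unfold UW priceH
  rw [hR, hI]
  generalize (θH - βH * θH) / (θL - βH * θH) = R at *
  have hpw := Real.rpow_pos_of_pos (mul_pos hRp hq) (θH / (θH - θL))
  rw [← Real.log_lt_log_iff hη2 (by positivity), Real.log_div (by positivity) ha.ne',
    Real.log_mul hpw.ne' (Real.exp_ne_zero _), Real.log_exp,
    Real.log_rpow (mul_pos hRp hq), Real.log_mul hRp.ne' hq.ne', Real.log_div ha.ne' hb.ne',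
    Real.log_mul hη2.ne' hb.ne', Real.log_mul hη2.ne' ha.ne', ← mul_lt_mul_iff_right₀ (b := Real.log η2) hD]
  have e : (θH - θL) * (θH / (θH - θL) * (Real.log R + (Real.log (IL' - Ir1) - Real.log (IH' - Ir1)))
      + (η3 / (βL * (η1 - η3)) - η3 / (θH - θL) * (IH' - IL')) - Real.log (IL' - Ir1))
      = θH * (Real.log R + (Real.log (IL' - Ir1) - Real.log (IH' - Ir1)))
      + η3 * ((θH - θL) / (βL * (η1 - η3))) - η3 * (IH' - IL')
      - (θH - θL) * Real.log (IL' - Ir1) := by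
    field_simp
    ring
  rw [e]
  constructor <;> intro h <;> linarith
end

section
/- Assume additionally θ_L > β_H·θ_H. Then for every fixed I_H > I_r1, the function I_L ↦ f(I_L, I_H) has second derivative −(θ_L − β_H·θ_H)/(I_L − I_r1)^2 at every I_L > I_r1, and is strictly concave on the open interval (I_r1, ∞). -/
open Real

theorem stmt_3
    (θL θH βL βH η1 η2 η3 Ir1 Ir2 ΔC : ℝ)
    (hθL : 0 < θL) (hθ : θL < θH)
    (hβL0 : 0 < βL) (hβL1 : βL < 1)
    (hβH0 : 0 < βH) (hβH1 : βH < 1)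
    (hβ : βL + βH = 1)
    (hη3 : 0 < η3) (hη13 : η3 < η1) (hη2 : 0 < η2)
    (hIr : Ir1 < Ir2)
    (hmono : βH * θH < θL)
    (IH : ℝ) (hIH : Ir1 < IH) :
    (∀ IL : ℝ, Ir1 < IL →
      HasDerivAt (deriv (fun x => fobj θL θH βL βH η1 η2 η3 Ir1 Ir2 ΔC (x) (IH)))
        (-((θL - βH * θH) / (IL - Ir1) ^ 2)) IL) ∧
    StrictConcaveOn ℝ (Set.Ioi Ir1) (fun x => fobj θL θH βL βH η1 η2 η3 Ir1 Ir2 ΔC (x) (IH)) := by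
  have h1 : ∀ x : ℝ, Ir1 < x →
      HasDerivAt (fun x => fobj θL θH βL βH η1 η2 η3 Ir1 Ir2 ΔC (x) (IH))
        ((θL - βH * θH) * (x - Ir1)⁻¹ + βL * (η3 - η1)) x := by
    intro x hx
    have hx0 : x - Ir1 ≠ 0 := (sub_pos.mpr hx).ne'
    have hH0 : IH - Ir1 ≠ 0 := (sub_pos.mpr hIH).ne'
    have hid := hasDerivAt_id' x
    have hlog : HasDerivAt (fun y : ℝ => Real.log (y - Ir1)) (1 / (x - Ir1)) x :=
      (hid.sub_const Ir1).log hx0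
    have hg : HasDerivAt (fun y : ℝ => (θL - βH * θH) * Real.log (y - Ir1)
        + (βL * (η3 - η1)) * y
        + (θL * Real.log η2 + βH * θH * Real.log (IH - Ir1) - η3 * Ir2
          + βH * (η3 - η1) * IH + ΔC))
        ((θL - βH * θH) * (1 / (x - Ir1)) + (βL * (η3 - η1)) * 1) x :=
      ((hlog.const_mul _).add (hid.const_mul _)).add_const _
    have he : (fun x => fobj θL θH βL βH η1 η2 η3 Ir1 Ir2 ΔC (x) (IH)) =ᶠ[nhds x]
        (fun y : ℝ => (θL - βH * θH) * Real.log (y - Ir1)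
        + (βL * (η3 - η1)) * y
        + (θL * Real.log η2 + βH * θH * Real.log (IH - Ir1) - η3 * Ir2
          + βH * (η3 - η1) * IH + ΔC)) := by
      filter_upwards [lt_mem_nhds hx] with y hy
      have hy0 : y - Ir1 ≠ 0 := (sub_pos.mpr hy).ne'
      have hb : βL = 1 - βH := by linarith
      simp only [fobj, priceL, priceH]
      rw [Real.log_mul hη2.ne' hy0, Real.log_div hH0 hy0, hb]
      ring
    have := hg.congr_of_eventuallyEq he
    simpa [one_div] using this
  have h2 : ∀ IL : ℝ, Ir1 < IL →
      HasDerivAt (deriv (fun x => fobj θL θH βL βH η1 η2 η3 Ir1 Ir2 ΔC (x) (IH)))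
        (-((θL - βH * θH) / (IL - Ir1) ^ 2)) IL := by
    intro x hx
    have hx0 : x - Ir1 ≠ 0 := (sub_pos.mpr hx).ne'
    have hg : HasDerivAt (fun y : ℝ => (θL - βH * θH) * (y - Ir1)⁻¹ + βL * (η3 - η1))
        ((θL - βH * θH) * (-1 / (x - Ir1) ^ 2)) x :=
      ((((hasDerivAt_id' x).sub_const Ir1).fun_inv hx0).const_mul _).add_const _
    have he : deriv (fun x => fobj θL θH βL βH η1 η2 η3 Ir1 Ir2 ΔC (x) (IH)) =ᶠ[nhds x]
        (fun y : ℝ => (θL - βH * θH) * (y - Ir1)⁻¹ + βL * (η3 - η1)) := by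
      filter_upwards [lt_mem_nhds hx] with y hy
      exact (h1 y hy).deriv
    have := hg.congr_of_eventuallyEq he
    have e : -((θL - βH * θH) / (x - Ir1) ^ 2) = (θL - βH * θH) * (-1 / (x - Ir1) ^ 2) := by
      ring
    rw [e]
    exact this
  refine ⟨h2, strictConcaveOn_of_deriv2_neg (convex_Ioi _)
    (fun x hx => (h1 x hx).continuousAt.continuousWithinAt) ?_⟩
  intro x hx
  rw [interior_Ioi] at hx
  have hx' : 0 < x - Ir1 := sub_pos.mpr hx
  have hd : 0 < θL - βH * θH := sub_pos.mpr hmono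
  have : deriv^[2] (fun x => fobj θL θH βL βH η1 η2 η3 Ir1 Ir2 ΔC (x) (IH)) x
      = -((θL - βH * θH) / (x - Ir1) ^ 2) := (h2 x hx).deriv
  rw [this]
  exact neg_lt_zero.mpr (by positivity)
end

section
/- Assume additionally θ_L > β_H·θ_H. Then for I_L > I_r1 and any fixed I_H > I_r1, the derivative of I_L ↦ f(I_L, I_H) vanishes at I_L if and only if I_L = I_r1 + (θ_L − β_H·θ_H)/(β_L·(η_1 − η_3)). -/
open Real

theorem stmt_5
    (θL θH βL βH η1 η2 η3 Ir1 Ir2 ΔC : ℝ)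
    (hθL : 0 < θL) (hθ : θL < θH)
    (hβL0 : 0 < βL) (hβL1 : βL < 1)
    (hβH0 : 0 < βH) (hβH1 : βH < 1)
    (hβ : βL + βH = 1)
    (hη3 : 0 < η3) (hη13 : η3 < η1) (hη2 : 0 < η2)
    (hIr : Ir1 < Ir2)
    (hmono : βH * θH < θL)
    (IH : ℝ) (hIH : Ir1 < IH) (IL : ℝ) (hIL : Ir1 < IL) :
    deriv (fun x => fobj θL θH βL βH η1 η2 η3 Ir1 Ir2 ΔC (x) (IH)) IL = 0 ↔
      IL = Ir1 + (θL - βH * θH) / (βL * (η1 - η3)) := by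
  have hd : 0 < IL - Ir1 := by linarith
  have hd' : 0 < IH - Ir1 := by linarith
  have hne : IL - Ir1 ≠ 0 := hd.ne'
  have hne' : IH - Ir1 ≠ 0 := hd'.ne'
  have hη2' : η2 ≠ 0 := hη2.ne'
  have h0 : HasDerivAt (fun x : ℝ => x - Ir1) 1 IL := (hasDerivAt_id IL).sub_const Ir1
  have h1 : HasDerivAt (fun x : ℝ => Real.log (η2 * (x - Ir1))) (1 / (IL - Ir1)) IL := by
    have := (h0.const_mul η2).log (by positivity)
    convert this using 1
    field_simp
  have h2 : HasDerivAt (fun x : ℝ => Real.log ((IH - Ir1) / (x - Ir1))) (-1 / (IL - Ir1)) IL := by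
    have := ((hasDerivAt_const IL (IH - Ir1)).div h0 hne).log (by simp only [Pi.div_apply]; positivity)
    convert this using 1
    · rfl
    change _ = (0 * (IL - Ir1) - (IH - Ir1) * 1) / (IL - Ir1) ^ 2 / ((IH - Ir1) / (IL - Ir1))
    field_simp
    ring
  have h3 : HasDerivAt (fun x : ℝ => priceL θL η2 η3 Ir1 Ir2 x) (θL * (1 / (IL - Ir1)) + η3 * 1) IL :=
    (h1.const_mul θL).add (((hasDerivAt_id IL).sub_const Ir2).const_mul η3)
  have h4 : HasDerivAt (fun x : ℝ => priceH θL θH η2 η3 Ir1 Ir2 x IH)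
      (θL * (1 / (IL - Ir1)) + η3 * 1 + θH * (-1 / (IL - Ir1)) + η3 * (-1)) IL :=
    (h3.add (h2.const_mul θH)).add (((hasDerivAt_id IL).const_sub IH).const_mul η3)
  have h5 : HasDerivAt (fun x => fobj θL θH βL βH η1 η2 η3 Ir1 Ir2 ΔC (x) (IH))
      (βL * (θL * (1 / (IL - Ir1)) + η3 * 1 - η1 * 1) + βH * (θL * (1 / (IL - Ir1)) + η3 * 1 + θH * (-1 / (IL - Ir1)) + η3 * (-1))) IL :=
    (((h3.sub ((hasDerivAt_id IL).const_mul η1)).const_mul βL).add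
      ((h4.sub_const (η1 * IH)).const_mul βH)).add_const ΔC
  have hk : 0 < βL * (η1 - η3) := mul_pos hβL0 (by linarith)
  have e : βL * (θL * (1 / (IL - Ir1)) + η3 * 1 - η1 * 1) + βH * (θL * (1 / (IL - Ir1)) + η3 * 1 + θH * (-1 / (IL - Ir1)) + η3 * (-1))
      = ((θL - βH * θH) - (IL - Ir1) * (βL * (η1 - η3))) / (IL - Ir1) := by
    have hb : βH = 1 - βL := by linarith
    subst hb
    field_simp
    ring
  rw [h5.deriv, e, div_eq_zero_iff, or_iff_left hne, sub_eq_zero, ← sub_eq_iff_eq_add',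
    eq_div_iff hk.ne']
  exact eq_comm
end

section
/- For I_H > I_r1 and any fixed I_L > I_r1, the derivative of I_H ↦ f(I_L, I_H) vanishes at I_H if and only if I_H = I_r1 + θ_H/(η_1 − η_3). -/
open Real

theorem stmt_6
    (θL θH βL βH η1 η2 η3 Ir1 Ir2 ΔC : ℝ)
    (hθL : 0 < θL) (hθ : θL < θH)
    (hβL0 : 0 < βL) (hβL1 : βL < 1)
    (hβH0 : 0 < βH) (hβH1 : βH < 1)
    (hβ : βL + βH = 1)
    (hη3 : 0 < η3) (hη13 : η3 < η1) (hη2 : 0 < η2)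
    (hIr : Ir1 < Ir2)
    (IL : ℝ) (hIL : Ir1 < IL) (IH : ℝ) (hIH : Ir1 < IH) :
    deriv (fun y => fobj θL θH βL βH η1 η2 η3 Ir1 Ir2 ΔC (IL) (y)) IH = 0 ↔
      IH = Ir1 + θH / (η1 - η3) := by
  have h1 : 0 < IH - Ir1 := by linarith
  have h2 : 0 < IL - Ir1 := by linarith
  have h3 : 0 < η1 - η3 := by linarith
  have hlog : HasDerivAt (fun y : ℝ => Real.log ((y - Ir1) / (IL - Ir1)))
      ((1 / (IL - Ir1)) / ((IH - Ir1) / (IL - Ir1))) IH :=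
    (((hasDerivAt_id IH).sub_const Ir1).div_const (IL - Ir1)).log (div_pos h1 h2).ne'
  have hη : HasDerivAt (fun y : ℝ => η3 * (y - IL)) (η3 * 1) IH :=
    ((hasDerivAt_id IH).sub_const IL).const_mul η3
  have hη' : HasDerivAt (fun y : ℝ => η1 * y) (η1 * 1) IH :=
    (hasDerivAt_id IH).const_mul η1
  have hd : HasDerivAt (fun y => fobj θL θH βL βH η1 η2 η3 Ir1 Ir2 ΔC (IL) (y))
      (βH * (θH * ((1 / (IL - Ir1)) / ((IH - Ir1) / (IL - Ir1))) + η3 * 1 - η1 * 1)) IH := by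
    unfold fobj priceH
    exact ((((((hlog.const_mul θH).const_add _).add hη).sub hη').const_mul βH).const_add _).add_const _
  have e : (1 / (IL - Ir1)) / ((IH - Ir1) / (IL - Ir1)) = 1 / (IH - Ir1) := by
    field_simp
  rw [hd.deriv, e, mul_eq_zero, or_iff_right hβH0.ne', ← sub_eq_iff_eq_add', eq_div_iff h3.ne']
  have e2 : θH * (1 / (IH - Ir1)) = θH / (IH - Ir1) := by ring
  rw [e2]
  constructor
  · intro h
    have h4 : θH / (IH - Ir1) = η1 - η3 := by linarith
    rw [div_eq_iff h1.ne'] at h4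
    linarith
  · intro h
    have h4 : θH / (IH - Ir1) = η1 - η3 := by
      rw [div_eq_iff h1.ne']
      linarith
    linarith
end

section
/- Assume additionally θ_L > β_H·θ_H. Then for all I_L, I_H > I_r1, f(I_L, I_H) ≤ f(I_L*, I_H*), with equality if and only if (I_L, I_H) = (I_L*, I_H*); that is, (I_L*, I_H*) is the unique global maximizer of f on (I_r1, ∞) × (I_r1, ∞). -/
open Real

theorem aux_key (a b x : ℝ) (ha : 0 < a) (hb : 0 < b) (hx : 0 < x) :
    a * Real.log x - b * x ≤ a * Real.log (a / b) - b * (a / b) ∧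
    (a * Real.log x - b * x = a * Real.log (a / b) - b * (a / b) → x = a / b) := by
  have hab : 0 < a / b := div_pos ha hb
  have hba : b * (a / b) = a := by field_simp
  have ht : 0 < x / (a / b) := div_pos hx hab
  have hlog : Real.log (x / (a / b)) = Real.log x - Real.log (a / b) :=
    Real.log_div hx.ne' hab.ne'
  have hat : a * (x / (a / b)) = b * x := by field_simp
  have h1 := Real.log_le_sub_one_of_pos ht
  constructor
  · have := mul_le_mul_of_nonneg_left h1 ha.le
    rw [hlog] at this
    linarith
  · intro h
    by_contra hne
    have hne' : x / (a / b) ≠ 1 := by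
      intro h'
      exact hne ((div_eq_one_iff_eq hab.ne').1 h')
    have := mul_lt_mul_of_pos_left (Real.log_lt_sub_one_of_pos ht hne') ha
    rw [hlog] at this
    linarith

theorem aux_f (θL θH βL βH η1 η2 η3 Ir1 Ir2 ΔC IL IH : ℝ) (hβ : βL + βH = 1)
    (hη2 : 0 < η2) (hL : 0 < IL - Ir1) (hH : 0 < IH - Ir1) :
    fobj θL θH βL βH η1 η2 η3 Ir1 Ir2 ΔC IL IH =
      ((θL - βH * θH) * Real.log (IL - Ir1) - (βL * (η1 - η3)) * (IL - Ir1))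
      + βH * (θH * Real.log (IH - Ir1) - (η1 - η3) * (IH - Ir1))
      + (θL * Real.log η2 - η3 * Ir2 - (η1 - η3) * Ir1 + ΔC) := by
  unfold fobj priceH priceL
  rw [Real.log_mul hη2.ne' hL.ne', Real.log_div hH.ne' hL.ne']
  obtain rfl : βL = 1 - βH := by linarith
  ring

theorem stmt_7
    (θL θH βL βH η1 η2 η3 Ir1 Ir2 ΔC : ℝ)
    (hθL : 0 < θL) (hθ : θL < θH)
    (hβL0 : 0 < βL) (hβL1 : βL < 1)
    (hβH0 : 0 < βH) (hβH1 : βH < 1)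
    (hβ : βL + βH = 1)
    (hη3 : 0 < η3) (hη13 : η3 < η1) (hη2 : 0 < η2)
    (hIr : Ir1 < Ir2)
    (hmono : βH * θH < θL) :
    ∀ IL IH : ℝ, Ir1 < IL → Ir1 < IH →
      fobj θL θH βL βH η1 η2 η3 Ir1 Ir2 ΔC (IL) (IH) ≤ fobj θL θH βL βH η1 η2 η3 Ir1 Ir2 ΔC (ILstar θL θH βL βH η1 η3 Ir1) (IHstar θH η1 η3 Ir1) ∧
      (fobj θL θH βL βH η1 η2 η3 Ir1 Ir2 ΔC (IL) (IH) = fobj θL θH βL βH η1 η2 η3 Ir1 Ir2 ΔC (ILstar θL θH βL βH η1 η3 Ir1) (IHstar θH η1 η3 Ir1) ↔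
        IL = ILstar θL θH βL βH η1 η3 Ir1 ∧ IH = IHstar θH η1 η3 Ir1) := by
  intro IL IH hIL hIH
  have hη : 0 < η1 - η3 := by linarith
  have hθH : 0 < θH := by linarith
  have ha : 0 < θL - βH * θH := by linarith
  have hb : 0 < βL * (η1 - η3) := mul_pos hβL0 hη
  have eL : ILstar θL θH βL βH η1 η3 Ir1 - Ir1 = (θL - βH * θH) / (βL * (η1 - η3)) := by
    unfold ILstar; ring
  have eH : IHstar θH η1 η3 Ir1 - Ir1 = θH / (η1 - η3) := by
    unfold IHstar; ring
  obtain ⟨l1, l2⟩ := aux_key _ _ (IL - Ir1) ha hb (by linarith)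
  obtain ⟨h1, h2⟩ := aux_key _ _ (IH - Ir1) hθH hη (by linarith)
  rw [← eL] at l1 l2
  rw [← eH] at h1 h2
  have h1' := mul_le_mul_of_nonneg_left h1 hβH0.le
  have f1 := aux_f θL θH βL βH η1 η2 η3 Ir1 Ir2 ΔC IL IH hβ hη2 (by linarith) (by linarith)
  have f2 := aux_f θL θH βL βH η1 η2 η3 Ir1 Ir2 ΔC (ILstar θL θH βL βH η1 η3 Ir1)
    (IHstar θH η1 η3 Ir1) hβ hη2 (by rw [eL]; exact div_pos ha hb)
    (by rw [eH]; exact div_pos hθH hη)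
  refine ⟨by rw [f1, f2]; linarith, ?_, ?_⟩
  · intro h
    rw [f1, f2] at h
    have e1 := l2 (by linarith)
    have e2 := h2 (mul_left_cancel₀ hβH0.ne' (by linarith))
    exact ⟨by linarith, by linarith⟩
  · rintro ⟨e1, e2⟩
    rw [← e1, ← e2]
end

section
/- Assume additionally θ_L > β_H·θ_H. Then for any contract (p_L, I_L, p_H, I_H) with I_L, I_H > I_r1 that satisfies the IR constraints U_W(θ_L, I_L, p_L) ≥ 0 and U_W(θ_H, I_H, p_H) ≥ 0 and the IC constraints U_W(θ_L, I_L, p_L) ≥ U_W(θ_L, I_H, p_H) and U_W(θ_H, I_H, p_H) ≥ U_W(θ_H, I_L, p_L), the edge-server expected utility satisfies β_L·(p_L − η_1·I_L) + β_H·(p_H − η_1·I_H) + ΔC ≤ f(I_L*, I_H*). -/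
open Real

theorem aux_log (a c x : ℝ) (ha : 0 < a) (hc : 0 < c) (hx : 0 < x) :
    a * (Real.log x - Real.log (a / c)) ≤ c * (x - a / c) := by
  have h := Real.log_le_sub_one_of_pos (div_pos hx (div_pos ha hc))
  rw [Real.log_div hx.ne' (div_pos ha hc).ne'] at h
  have h2 := mul_le_mul_of_nonneg_left h ha.le
  have h3 : a * (x / (a / c) - 1) = c * (x - a / c) := by
    field_simp
  linarith

theorem stmt_8
    (θL θH βL βH η1 η2 η3 Ir1 Ir2 ΔC : ℝ)
    (hθL : 0 < θL) (hθ : θL < θH)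
    (hβL0 : 0 < βL) (hβL1 : βL < 1)
    (hβH0 : 0 < βH) (hβH1 : βH < 1)
    (hβ : βL + βH = 1)
    (hη3 : 0 < η3) (hη13 : η3 < η1) (hη2 : 0 < η2)
    (hIr : Ir1 < Ir2)
    (hmono : βH * θH < θL)
    (pLo IL pHi IH : ℝ) (hIL : Ir1 < IL) (hIH : Ir1 < IH)
    (hIRL : 0 ≤ UW η2 η3 Ir1 Ir2 θL (IL) (pLo))
    (hIRH : 0 ≤ UW η2 η3 Ir1 Ir2 θH (IH) (pHi))
    (hICL : UW η2 η3 Ir1 Ir2 θL (IH) (pHi) ≤ UW η2 η3 Ir1 Ir2 θL (IL) (pLo))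
    (hICH : UW η2 η3 Ir1 Ir2 θH (IL) (pLo) ≤ UW η2 η3 Ir1 Ir2 θH (IH) (pHi)) :
    βL * (pLo - η1 * IL) + βH * (pHi - η1 * IH) + ΔC ≤ fobj θL θH βL βH η1 η2 η3 Ir1 Ir2 ΔC (ILstar θL θH βL βH η1 η3 Ir1) (IHstar θH η1 η3 Ir1) := by
  have hd : 0 < η1 - η3 := by linarith
  have hx : 0 < IL - Ir1 := by linarith
  have hy : 0 < IH - Ir1 := by linarith
  have ha : 0 < θL - βH * θH := by linarith
  have hc : 0 < βL * (η1 - η3) := mul_pos hβL0 hd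
  have hH : 0 < θH := by linarith
  have k1 := aux_log _ _ _ ha hc hx
  have k2 := mul_le_mul_of_nonneg_left (aux_log _ _ _ hH hd hy) hβH0.le
  have hxs := div_pos ha hc
  have hys := div_pos hH hd
  unfold fobj priceH priceL ILstar IHstar
  unfold UW at hIRL hICH
  simp only [add_sub_cancel_left]
  generalize (θL - βH * θH) / (βL * (η1 - η3)) = xs at *
  generalize θH / (η1 - η3) = ys at *
  rw [Real.log_mul hη2.ne' hx.ne'] at hIRL hICH
  rw [Real.log_mul hη2.ne' hy.ne'] at hICH
  rw [Real.log_mul hη2.ne' hxs.ne', Real.log_div hys.ne' hxs.ne']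
  have m2 := mul_le_mul_of_nonneg_left hICH hβH0.le
  obtain rfl : βL = 1 - βH := by linarith
  linarith
end

section
/- Assume additionally θ_L > β_H·θ_H. Then the optimal contract satisfies the low-type incentive compatibility constraint: U_W(θ_L, I_L*, p_L*) ≥ U_W(θ_L, I_H*, p_H*); moreover U_W(θ_L, I_L*, p_L*) − U_W(θ_L, I_H*, p_H*) = (θ_H − θ_L)·ln((I_H* − I_r1)/(I_L* − I_r1)) ≥ 0. -/
open Real

theorem stmt_9
    (θL θH βL βH η1 η2 η3 Ir1 Ir2 ΔC : ℝ)
    (hθL : 0 < θL) (hθ : θL < θH)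
    (hβL0 : 0 < βL) (hβL1 : βL < 1)
    (hβH0 : 0 < βH) (hβH1 : βH < 1)
    (hβ : βL + βH = 1)
    (hη3 : 0 < η3) (hη13 : η3 < η1) (hη2 : 0 < η2)
    (hIr : Ir1 < Ir2)
    (hmono : βH * θH < θL) :
    UW η2 η3 Ir1 Ir2 θL (IHstar θH η1 η3 Ir1) (priceH θL θH η2 η3 Ir1 Ir2 (ILstar θL θH βL βH η1 η3 Ir1) (IHstar θH η1 η3 Ir1)) ≤ UW η2 η3 Ir1 Ir2 θL (ILstar θL θH βL βH η1 η3 Ir1) (priceL θL η2 η3 Ir1 Ir2 (ILstar θL θH βL βH η1 η3 Ir1)) ∧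
    UW η2 η3 Ir1 Ir2 θL (ILstar θL θH βL βH η1 η3 Ir1) (priceL θL η2 η3 Ir1 Ir2 (ILstar θL θH βL βH η1 η3 Ir1)) - UW η2 η3 Ir1 Ir2 θL (IHstar θH η1 η3 Ir1) (priceH θL θH η2 η3 Ir1 Ir2 (ILstar θL θH βL βH η1 η3 Ir1) (IHstar θH η1 η3 Ir1)) =
      (θH - θL) * Real.log (((IHstar θH η1 η3 Ir1) - Ir1) / ((ILstar θL θH βL βH η1 η3 Ir1) - Ir1)) ∧
    0 ≤ (θH - θL) * Real.log (((IHstar θH η1 η3 Ir1) - Ir1) / ((ILstar θL θH βL βH η1 η3 Ir1) - Ir1)) := by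
  have hd : 0 < η1 - η3 := by linarith
  have ha : 0 < ILstar θL θH βL βH η1 η3 Ir1 - Ir1 := by
    unfold ILstar
    rw [add_sub_cancel_left]
    exact div_pos (by linarith) (mul_pos hβL0 hd)
  have hab : ILstar θL θH βL βH η1 η3 Ir1 - Ir1 ≤ IHstar θH η1 η3 Ir1 - Ir1 := by
    unfold ILstar IHstar
    rw [add_sub_cancel_left, add_sub_cancel_left, ← div_div]
    apply div_le_div_of_nonneg_right _ hd.le
    rw [div_le_iff₀ hβL0]
    have : βL = 1 - βH := by linarith
    subst this
    nlinarith
  generalize ILstar θL θH βL βH η1 η3 Ir1 = a at *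
  generalize IHstar θH η1 η3 Ir1 = b at *
  have hb : 0 < b - Ir1 := by linarith
  have h3 : 0 ≤ (θH - θL) * Real.log ((b - Ir1) / (a - Ir1)) :=
    mul_nonneg (by linarith) (Real.log_nonneg ((one_le_div ha).2 hab))
  have h2 : UW η2 η3 Ir1 Ir2 θL a (priceL θL η2 η3 Ir1 Ir2 a)
      - UW η2 η3 Ir1 Ir2 θL b (priceH θL θH η2 η3 Ir1 Ir2 a b)
      = (θH - θL) * Real.log ((b - Ir1) / (a - Ir1)) := by
    unfold UW priceH priceL
    rw [Real.log_mul hη2.ne' ha.ne', Real.log_mul hη2.ne' hb.ne', Real.log_div hb.ne' ha.ne']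
    ring
  exact ⟨by linarith, h2, h3⟩
end

section
/- Assume additionally θ_L > β_H·θ_H. Then the high-type utility at the optimal contract equals the information rent U_W(θ_H, I_H*, p_H*) = (θ_H − θ_L)·ln(η_2·(I_L* − I_r1)); in particular, the high-type IR constraint U_W(θ_H, I_H*, p_H*) ≥ 0 holds if and only if η_2·(I_L* − I_r1) ≥ 1. -/
open Real

theorem stmt_10
    (θL θH βL βH η1 η2 η3 Ir1 Ir2 ΔC : ℝ)
    (hθL : 0 < θL) (hθ : θL < θH)
    (hβL0 : 0 < βL) (hβL1 : βL < 1)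
    (hβH0 : 0 < βH) (hβH1 : βH < 1)
    (hβ : βL + βH = 1)
    (hη3 : 0 < η3) (hη13 : η3 < η1) (hη2 : 0 < η2)
    (hIr : Ir1 < Ir2)
    (hmono : βH * θH < θL) :
    UW η2 η3 Ir1 Ir2 θH (IHstar θH η1 η3 Ir1) (priceH θL θH η2 η3 Ir1 Ir2 (ILstar θL θH βL βH η1 η3 Ir1) (IHstar θH η1 η3 Ir1)) =
      (θH - θL) * Real.log (η2 * ((ILstar θL θH βL βH η1 η3 Ir1) - Ir1)) ∧
    (0 ≤ UW η2 η3 Ir1 Ir2 θH (IHstar θH η1 η3 Ir1) (priceH θL θH η2 η3 Ir1 Ir2 (ILstar θL θH βL βH η1 η3 Ir1) (IHstar θH η1 η3 Ir1)) ↔ 1 ≤ η2 * ((ILstar θL θH βL βH η1 η3 Ir1) - Ir1)) := by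
  have hd : 0 < η1 - η3 := sub_pos.mpr hη13
  have hL : 0 < ILstar θL θH βL βH η1 η3 Ir1 - Ir1 := by
    have h : 0 < (θL - βH * θH) / (βL * (η1 - η3)) :=
      div_pos (sub_pos.mpr hmono) (mul_pos hβL0 hd)
    unfold ILstar
    linarith
  have hH : 0 < IHstar θH η1 η3 Ir1 - Ir1 := by
    have h : 0 < θH / (η1 - η3) := div_pos (hθL.trans hθ) hd
    unfold IHstar
    linarith
  generalize ILstar θL θH βL βH η1 η3 Ir1 = a at *
  generalize IHstar θH η1 η3 Ir1 = b at *
  have key : UW η2 η3 Ir1 Ir2 θH b (priceH θL θH η2 η3 Ir1 Ir2 a b) =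
      (θH - θL) * Real.log (η2 * (a - Ir1)) := by
    unfold UW priceH priceL
    rw [Real.log_div hH.ne' hL.ne', Real.log_mul hη2.ne' hH.ne', Real.log_mul hη2.ne' hL.ne']
    ring
  refine ⟨key, ?_⟩
  rw [key, mul_nonneg_iff_of_pos_left (sub_pos.mpr hθ),
    Real.log_nonneg_iff (mul_pos hη2 hL)]
end

section
/- Binding of the low-type IR constraint at the optimum: let (p_L, I_L, p_H, I_H) be a contract with I_L, I_H > I_r1 and η_2·(I_L − I_r1) ≥ 1 that satisfies IR and IC, and suppose U_W(θ_L, I_L, p_L) > 0. Then for every δ with 0 < δ ≤ U_W(θ_L, I_L, p_L), the contract (p_L + δ, I_L, p_H + δ, I_H) also satisfies IR and IC and yields strictly larger edge-server expected utility; consequently no contract with strict low-type IR can maximize the edge-server expected utility over IR- and IC-feasible contracts. -/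
open Real

theorem stmt_12
    (θL θH βL βH η1 η2 η3 Ir1 Ir2 ΔC : ℝ)
    (hθL : 0 < θL) (hθ : θL < θH)
    (hβL0 : 0 < βL) (hβL1 : βL < 1)
    (hβH0 : 0 < βH) (hβH1 : βH < 1)
    (hβ : βL + βH = 1)
    (hη3 : 0 < η3) (hη13 : η3 < η1) (hη2 : 0 < η2)
    (hIr : Ir1 < Ir2)
    (pLo IL pHi IH : ℝ) (hIL : Ir1 < IL) (hIH : Ir1 < IH)
    (hscale : 1 ≤ η2 * (IL - Ir1))
    (hIRL : 0 ≤ UW η2 η3 Ir1 Ir2 θL (IL) (pLo))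
    (hIRH : 0 ≤ UW η2 η3 Ir1 Ir2 θH (IH) (pHi))
    (hICL : UW η2 η3 Ir1 Ir2 θL (IH) (pHi) ≤ UW η2 η3 Ir1 Ir2 θL (IL) (pLo))
    (hICH : UW η2 η3 Ir1 Ir2 θH (IL) (pLo) ≤ UW η2 η3 Ir1 Ir2 θH (IH) (pHi))
    (hstrict : 0 < UW η2 η3 Ir1 Ir2 θL (IL) (pLo)) :
    (∀ δ : ℝ, 0 < δ → δ ≤ UW η2 η3 Ir1 Ir2 θL (IL) (pLo) →
      (0 ≤ UW η2 η3 Ir1 Ir2 θL (IL) (pLo + δ) ∧ 0 ≤ UW η2 η3 Ir1 Ir2 θH (IH) (pHi + δ) ∧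
       UW η2 η3 Ir1 Ir2 θL (IH) (pHi + δ) ≤ UW η2 η3 Ir1 Ir2 θL (IL) (pLo + δ) ∧
       UW η2 η3 Ir1 Ir2 θH (IL) (pLo + δ) ≤ UW η2 η3 Ir1 Ir2 θH (IH) (pHi + δ) ∧
       UE βL βH η1 ΔC (pLo) (IL) (pHi) (IH) < UE βL βH η1 ΔC (pLo + δ) (IL) (pHi + δ) (IH))) ∧
    (∃ qLo JL qHi JH : ℝ, Ir1 < JL ∧ Ir1 < JH ∧
      (0 ≤ UW η2 η3 Ir1 Ir2 θL (JL) (qLo) ∧ 0 ≤ UW η2 η3 Ir1 Ir2 θH (JH) (qHi) ∧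
       UW η2 η3 Ir1 Ir2 θL (JH) (qHi) ≤ UW η2 η3 Ir1 Ir2 θL (JL) (qLo) ∧
       UW η2 η3 Ir1 Ir2 θH (JL) (qLo) ≤ UW η2 η3 Ir1 Ir2 θH (JH) (qHi)) ∧
      UE βL βH η1 ΔC (pLo) (IL) (pHi) (IH) < UE βL βH η1 ΔC (qLo) (JL) (qHi) (JH)) := by
  have main : ∀ δ : ℝ, 0 < δ → δ ≤ UW η2 η3 Ir1 Ir2 θL (IL) (pLo) →
      (0 ≤ UW η2 η3 Ir1 Ir2 θL (IL) (pLo + δ) ∧ 0 ≤ UW η2 η3 Ir1 Ir2 θH (IH) (pHi + δ) ∧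
       UW η2 η3 Ir1 Ir2 θL (IH) (pHi + δ) ≤ UW η2 η3 Ir1 Ir2 θL (IL) (pLo + δ) ∧
       UW η2 η3 Ir1 Ir2 θH (IL) (pLo + δ) ≤ UW η2 η3 Ir1 Ir2 θH (IH) (pHi + δ) ∧
       UE βL βH η1 ΔC (pLo) (IL) (pHi) (IH) < UE βL βH η1 ΔC (pLo + δ) (IL) (pHi + δ) (IH)) := by
    intro δ h0 h1
    have hlog : 0 ≤ Real.log (η2 * (IL - Ir1)) := Real.log_nonneg hscale
    have hm := mul_le_mul_of_nonneg_right hθ.le hlog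
    have hL := mul_pos hβL0 h0
    have hH := mul_pos hβH0 h0
    unfold UW at *
    unfold UE
    refine ⟨by linarith, by linarith, by linarith, by linarith, by linarith⟩
  refine ⟨main, ?_⟩
  obtain ⟨a, b, c, d, e⟩ := main _ hstrict le_rfl
  exact ⟨_, _, _, _, hIL, hIH, ⟨a, b, c, d⟩, e⟩
end

section
/- Binding of the high-type IC constraint at the optimum: let (p_L, I_L, p_H, I_H) be a contract with I_L, I_H > I_r1 and η_2·(I_L − I_r1) ≥ 1 that satisfies IR and IC, and suppose U_W(θ_H, I_H, p_H) > U_W(θ_H, I_L, p_L). Then for every δ with 0 < δ ≤ U_W(θ_H, I_H, p_H) − U_W(θ_H, I_L, p_L), the contract (p_L, I_L, p_H + δ, I_H) also satisfies IR and IC and yields strictly larger edge-server expected utility; consequently no contract with strict high-type IC can maximize the edge-server expected utility over IR- and IC-feasible contracts. -/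
open Real

theorem stmt_13
    (θL θH βL βH η1 η2 η3 Ir1 Ir2 ΔC : ℝ)
    (hθL : 0 < θL) (hθ : θL < θH)
    (hβL0 : 0 < βL) (hβL1 : βL < 1)
    (hβH0 : 0 < βH) (hβH1 : βH < 1)
    (hβ : βL + βH = 1)
    (hη3 : 0 < η3) (hη13 : η3 < η1) (hη2 : 0 < η2)
    (hIr : Ir1 < Ir2)
    (pLo IL pHi IH : ℝ) (hIL : Ir1 < IL) (hIH : Ir1 < IH)
    (hscale : 1 ≤ η2 * (IL - Ir1))
    (hIRL : 0 ≤ UW η2 η3 Ir1 Ir2 θL (IL) (pLo))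
    (hIRH : 0 ≤ UW η2 η3 Ir1 Ir2 θH (IH) (pHi))
    (hICL : UW η2 η3 Ir1 Ir2 θL (IH) (pHi) ≤ UW η2 η3 Ir1 Ir2 θL (IL) (pLo))
    (hICH : UW η2 η3 Ir1 Ir2 θH (IL) (pLo) ≤ UW η2 η3 Ir1 Ir2 θH (IH) (pHi))
    (hstrict : UW η2 η3 Ir1 Ir2 θH (IL) (pLo) < UW η2 η3 Ir1 Ir2 θH (IH) (pHi)) :
    (∀ δ : ℝ, 0 < δ →
      δ ≤ UW η2 η3 Ir1 Ir2 θH (IH) (pHi) - UW η2 η3 Ir1 Ir2 θH (IL) (pLo) →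
      (0 ≤ UW η2 η3 Ir1 Ir2 θL (IL) (pLo) ∧ 0 ≤ UW η2 η3 Ir1 Ir2 θH (IH) (pHi + δ) ∧
       UW η2 η3 Ir1 Ir2 θL (IH) (pHi + δ) ≤ UW η2 η3 Ir1 Ir2 θL (IL) (pLo) ∧
       UW η2 η3 Ir1 Ir2 θH (IL) (pLo) ≤ UW η2 η3 Ir1 Ir2 θH (IH) (pHi + δ) ∧
       UE βL βH η1 ΔC (pLo) (IL) (pHi) (IH) < UE βL βH η1 ΔC (pLo) (IL) (pHi + δ) (IH))) ∧
    (∃ qLo JL qHi JH : ℝ, Ir1 < JL ∧ Ir1 < JH ∧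
      (0 ≤ UW η2 η3 Ir1 Ir2 θL (JL) (qLo) ∧ 0 ≤ UW η2 η3 Ir1 Ir2 θH (JH) (qHi) ∧
       UW η2 η3 Ir1 Ir2 θL (JH) (qHi) ≤ UW η2 η3 Ir1 Ir2 θL (JL) (qLo) ∧
       UW η2 η3 Ir1 Ir2 θH (JL) (qLo) ≤ UW η2 η3 Ir1 Ir2 θH (JH) (qHi)) ∧
      UE βL βH η1 ΔC (pLo) (IL) (pHi) (IH) < UE βL βH η1 ΔC (qLo) (JL) (qHi) (JH)) := by
  have key : ∀ δ : ℝ, 0 < δ →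
      δ ≤ UW η2 η3 Ir1 Ir2 θH (IH) (pHi) - UW η2 η3 Ir1 Ir2 θH (IL) (pLo) →
      (0 ≤ UW η2 η3 Ir1 Ir2 θL (IL) (pLo) ∧ 0 ≤ UW η2 η3 Ir1 Ir2 θH (IH) (pHi + δ) ∧
       UW η2 η3 Ir1 Ir2 θL (IH) (pHi + δ) ≤ UW η2 η3 Ir1 Ir2 θL (IL) (pLo) ∧
       UW η2 η3 Ir1 Ir2 θH (IL) (pLo) ≤ UW η2 η3 Ir1 Ir2 θH (IH) (pHi + δ) ∧
       UE βL βH η1 ΔC (pLo) (IL) (pHi) (IH) < UE βL βH η1 ΔC (pLo) (IL) (pHi + δ) (IH)) := by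
    intro δ hδ hle
    have hlog : θL * Real.log (η2 * (IL - Ir1)) ≤ θH * Real.log (η2 * (IL - Ir1)) :=
      mul_le_mul_of_nonneg_right hθ.le (Real.log_nonneg hscale)
    have hb : 0 < βH * δ := mul_pos hβH0 hδ
    unfold UW at *
    unfold UE
    refine ⟨hIRL, ?_, ?_, ?_, ?_⟩
    · linarith
    · linarith
    · linarith
    · linarith
  refine ⟨key, ?_⟩
  obtain ⟨h1, h2, h3, h4, h5⟩ := key _ (sub_pos.mpr hstrict) le_rfl
  exact ⟨pLo, IL, _, IH, hIL, hIH, ⟨h1, h2, h3, h4⟩, h5⟩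
end

section
/- Monotonicity of the optimal prices: assume additionally θ_L > β_H·θ_H. Then p_H* − p_L* = θ_H·ln((θ_H − β_H·θ_H)/(θ_L − β_H·θ_H)) + η_3·(θ_H − θ_L)/(β_L·(η_1 − η_3)), and in particular p_H* > p_L*. -/
open Real

theorem stmt_16
    (θL θH βL βH η1 η2 η3 Ir1 Ir2 ΔC : ℝ)
    (hθL : 0 < θL) (hθ : θL < θH)
    (hβL0 : 0 < βL) (hβL1 : βL < 1)
    (hβH0 : 0 < βH) (hβH1 : βH < 1)
    (hβ : βL + βH = 1)
    (hη3 : 0 < η3) (hη13 : η3 < η1) (hη2 : 0 < η2)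
    (hIr : Ir1 < Ir2)
    (hmono : βH * θH < θL) :
    (priceH θL θH η2 η3 Ir1 Ir2 (ILstar θL θH βL βH η1 η3 Ir1) (IHstar θH η1 η3 Ir1)) - (priceL θL η2 η3 Ir1 Ir2 (ILstar θL θH βL βH η1 η3 Ir1)) =
      θH * Real.log ((θH - βH * θH) / (θL - βH * θH)) +
        η3 * ((θH - θL) / (βL * (η1 - η3))) ∧
    (priceL θL η2 η3 Ir1 Ir2 (ILstar θL θH βL βH η1 η3 Ir1)) < (priceH θL θH η2 η3 Ir1 Ir2 (ILstar θL θH βL βH η1 η3 Ir1) (IHstar θH η1 η3 Ir1)) := by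
  have hd : 0 < η1 - η3 := by linarith
  have hx : 0 < θL - βH * θH := by linarith
  have hθH : 0 < θH := by linarith
  have hβ' : βH = 1 - βL := by linarith
  have key : (priceH θL θH η2 η3 Ir1 Ir2 (ILstar θL θH βL βH η1 η3 Ir1) (IHstar θH η1 η3 Ir1)) - (priceL θL η2 η3 Ir1 Ir2 (ILstar θL θH βL βH η1 η3 Ir1)) =
      θH * Real.log ((θH - βH * θH) / (θL - βH * θH)) +
        η3 * ((θH - θL) / (βL * (η1 - η3))) := by
    have h1 : (IHstar θH η1 η3 Ir1 - Ir1) / (ILstar θL θH βL βH η1 η3 Ir1 - Ir1)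
        = (θH - βH * θH) / (θL - βH * θH) := by
      have e : θH - βH * θH = βL * θH := by rw [hβ']; ring
      rw [e]
      unfold IHstar ILstar
      rw [add_sub_cancel_left, add_sub_cancel_left]
      have := hx.ne'
      have := hd.ne'
      have := hβL0.ne'
      generalize θL - βH * θH = x at *
      generalize η1 - η3 = d at *
      field_simp
    have h2 : IHstar θH η1 η3 Ir1 - ILstar θL θH βL βH η1 η3 Ir1
        = (θH - θL) / (βL * (η1 - η3)) := by
      unfold IHstar ILstar
      have := hd.ne'
      have := hβL0.ne'
      rw [hβ']
      generalize η1 - η3 = d at *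
      field_simp
      ring
    unfold priceH
    rw [h1, h2]
    ring
  refine ⟨key, ?_⟩
  have hl : 0 < Real.log ((θH - βH * θH) / (θL - βH * θH)) := by
    apply Real.log_pos
    rw [one_lt_div hx]
    linarith
  have h3 : 0 < η3 * ((θH - θL) / (βL * (η1 - η3))) :=
    mul_pos hη3 (div_pos (by linarith) (mul_pos hβL0 hd))
  have h4 := mul_pos hθH hl
  linarith
end
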